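/- If the smooth projective toric variety X_Σ is semipositive, then the GKZ I-function has the expansion I^GKZ = e^{(t_0+δ)/ħ}(I_0 + I_1 ħ^{−1} + o(ħ^{−2})) with constant term I_0 = 1; that is, for every effective class β ≠ 0 the factor ∏_{ρ∈Σ(1)} [∏_{m=−∞}^0(D_ρ+mħ)]/[∏_{m=−∞}^{∫_β D_ρ}(D_ρ+mħ)] contains no ħ^0 term, the highest power of ħ^{−1} that can fail to appear being controlled by N = −K_{X_Σ}·β + #{ρ : D_ρ·β ≤ −1} ≥ 0, with N = 0 only when β = 0. -/

import Mathlib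

open scoped BigOperators

/-- `f = u^n * p` with `p` a power series in the submonoid `S`. -/
def GKZOrd {H : Type} [CommRing H] (S : Submonoid (PowerSeries H)) (n : ℤ)
    (f : LaurentSeries H) : Prop :=
  ∃ p ∈ S, f = HahnSeries.single n (1 : H) * HahnSeries.ofPowerSeries ℤ H p

theorem GKZOrd.prod {H : Type} [CommRing H] {S : Submonoid (PowerSeries H)} {ι : Type}
    (s : Finset ι) (n : ι → ℤ) (f : ι → LaurentSeries H)
    (h : ∀ i ∈ s, GKZOrd S (n i) (f i)) : GKZOrd S (∑ i ∈ s, n i) (∏ i ∈ s, f i) := by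
  classical
  induction s using Finset.induction_on with
  | empty => exact ⟨1, S.one_mem, by simp⟩
  | insert a s ha ih =>
    obtain ⟨p, hp, hp'⟩ := h a (by simp)
    obtain ⟨q, hq, hq'⟩ := ih (fun i hi => h i (by simp [hi]))
    refine ⟨p * q, S.mul_mem hp hq, ?_⟩
    rw [Finset.prod_insert ha, Finset.sum_insert ha, hp', hq', map_mul]
    have : (HahnSeries.single (n a + ∑ i ∈ s, n i) (1 : H)) =
      HahnSeries.single (n a) (1 : H) * HahnSeries.single (∑ i ∈ s, n i) (1 : H) := by
      simp [HahnSeries.single_mul_single]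
    rw [this]; ring

theorem gkz_factor {H : Type} [CommRing H] (D : H) (m : ℤ) :
    HahnSeries.C D + m • (HahnSeries.single (-1 : ℤ) 1 : LaurentSeries H) =
    HahnSeries.single (-1 : ℤ) (1 : H) * HahnSeries.ofPowerSeries ℤ H
      (PowerSeries.C (m : H) + PowerSeries.C D * PowerSeries.X) := by
  rw [map_add, map_mul, HahnSeries.ofPowerSeries_C, HahnSeries.ofPowerSeries_C,
    HahnSeries.ofPowerSeries_X]
  have h : (HahnSeries.single (-1 : ℤ) (1 : H)) * HahnSeries.single (1 : ℤ) (1 : H) = 1 := by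
    simp [HahnSeries.single_mul_single]
  have hm : (m • (HahnSeries.single (-1 : ℤ) 1 : LaurentSeries H)) =
      HahnSeries.C (m : H) * HahnSeries.single (-1 : ℤ) (1 : H) := by
    rw [zsmul_eq_mul, map_intCast]
  rw [hm]
  linear_combination (-HahnSeries.C D) * h

theorem gkz_den {H : Type} [CommRing H] [Algebra ℂ H] (D : H) (m : ℤ) (hm : m ≠ 0) :
    GKZOrd (IsUnit.submonoid (PowerSeries H)) (-1)
      (HahnSeries.C D + m • (HahnSeries.single (-1 : ℤ) 1 : LaurentSeries H)) := by
  refine ⟨_, ?_, gkz_factor D m⟩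
  rw [IsUnit.mem_submonoid_iff, PowerSeries.isUnit_iff_constantCoeff]
  have : IsUnit (algebraMap ℂ H (m : ℂ)) := by
    apply IsUnit.map
    exact isUnit_iff_ne_zero.mpr (by exact_mod_cast hm)
  simpa using this

theorem gkz_num {H : Type} [CommRing H] (D : H) (m : ℤ) :
    GKZOrd ⊤ (-1 + if m = 0 then 1 else 0)
      (HahnSeries.C D + m • (HahnSeries.single (-1 : ℤ) 1 : LaurentSeries H)) := by
  by_cases hm : m = 0
  · refine ⟨PowerSeries.C D, trivial, ?_⟩
    subst hm
    simp [HahnSeries.ofPowerSeries_C]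
  · rw [if_neg hm, add_zero]
    exact ⟨_, trivial, gkz_factor D m⟩

theorem gkz_count (d : ℤ) :
    (∑ m ∈ Finset.Icc (d + 1) 0, (-1 + if m = 0 then (1 : ℤ) else 0)) -
      ∑ _m ∈ Finset.Icc 1 d, (-1 : ℤ) = d + if d < 0 then 1 else 0 := by
  rw [Finset.sum_add_distrib, Finset.sum_ite_eq']
  simp only [Finset.sum_const, Int.card_Icc, Finset.mem_Icc, nsmul_eq_mul]
  split_ifs <;> omega

theorem gkz_coeff {H : Type} [CommRing H] (p : PowerSeries H) (n j : ℤ) (h : j < n) :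
    (HahnSeries.single n (1 : H) * HahnSeries.ofPowerSeries ℤ H p).coeff j = 0 := by
  have : j = (j - n) + n := by ring
  rw [this, HahnSeries.coeff_single_mul_add, one_mul, HahnSeries.ofPowerSeries_apply]
  apply HahnSeries.embDomain_of_notMem_range
  rintro ⟨k, hk⟩
  simp at hk
  omega

/-- **The constant term of the GKZ `I`-function of a semipositive toric variety is
`1`.**  Let `X_Σ` be a smooth projective toric variety, with torus-invariant divisor
classes `D_ρ ∈ H^*(X_Σ)` and intersection numbers `∫_β D_ρ = degZ β ρ` for curve
classes `β` in the Mori lattice `NE_ℤ(X_Σ)`.  Write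
`Φ_β = ∏_{ρ∈Σ(1)} [∏_{m=−∞}^0 (D_ρ + mħ)] / [∏_{m=−∞}^{∫_β D_ρ} (D_ρ + mħ)]`
for the summand of the GKZ `I`-function
`I^{GKZ} = e^{(t_0+δ)/ħ} Σ_{β ∈ NE_ℤ} q^β Φ_β`, an `H^*(X_Σ)`-valued Laurent series in
`ħ^{-1}` (below, `LaurentSeries H` is taken in the variable `u = ħ^{-1}`, so that
`ħ = u^{-1}` is `single (-1) 1`, and `Φ` is characterized as the solution of
`[∏_{ρ : ∫_β D_ρ > 0} ∏_{m=1}^{∫_β D_ρ} (D_ρ + mħ)] · Φ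
   = ∏_{ρ : ∫_β D_ρ < 0} ∏_{m=∫_β D_ρ + 1}^{0} (D_ρ + mħ)`).
If `X_Σ` is semipositive (`−K_{X_Σ}·β = Σ_ρ ∫_β D_ρ ≥ 0` for all effective `β`), then
`I^{GKZ} = e^{(t_0+δ)/ħ} (I_0 + I_1 ħ^{-1} + o(ħ^{-2}))` with `I_0 = 1`: each `Φ_β` has
no positive powers of `ħ` (the possible failure being controlled by
`N = −K_{X_Σ}·β + #{ρ : D_ρ·β ≤ −1} ≥ 0`), its `ħ^0`-term vanishes for `β ≠ 0`
(`N = 0` happens only for `β = 0`), and equals `1` for `β = 0`. -/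
theorem gkz_I_function_constant_term_eq_one
    (H : Type) [CommRing H] [Algebra ℂ H]
    (Λ : Type) [AddCommGroup Λ] (NE : AddSubmonoid Λ)
    (rays : Type) [Fintype rays]
    (Drho : rays → H) (degZ : Λ →+ (rays → ℤ))
    -- semipositivity: `−K_{X_Σ} · β ≥ 0` for every effective class
    (hsemipos : ∀ β ∈ NE, 0 ≤ ∑ ρ, degZ β ρ)
    -- the pairing between `H₂` and `H²` is perfect and the `D_ρ` generate `H²`
    (hnondeg : ∀ β : Λ, (∀ ρ, degZ β ρ = 0) → β = 0)
    (β : Λ) (hβ : β ∈ NE) (Φ : LaurentSeries H)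
    (hΦ : (∏ ρ, ∏ m ∈ Finset.Icc 1 (degZ β ρ),
            (HahnSeries.C (Drho ρ) +
              m • (HahnSeries.single (-1 : ℤ) 1 : LaurentSeries H))) * Φ =
          ∏ ρ, ∏ m ∈ Finset.Icc (degZ β ρ + 1) 0,
            (HahnSeries.C (Drho ρ) +
              m • (HahnSeries.single (-1 : ℤ) 1 : LaurentSeries H))) :
    (∀ j : ℤ, j < 0 → Φ.coeff j = 0) ∧
      (β ≠ 0 → Φ.coeff 0 = 0) ∧ (β = 0 → Φ.coeff 0 = 1) := by
  have hβ0 := hsemipos β hβ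
  have hA := GKZOrd.prod Finset.univ _ _ (fun ρ _ => GKZOrd.prod (Finset.Icc 1 (degZ β ρ))
    (fun _ => (-1 : ℤ)) _ (fun m hm => gkz_den (Drho ρ) m (by
      have := (Finset.mem_Icc.mp hm).1; omega)))
  have hB := GKZOrd.prod Finset.univ _ _ (fun ρ _ => GKZOrd.prod (Finset.Icc (degZ β ρ + 1) 0)
    _ _ (fun m _ => gkz_num (Drho ρ) m))
  have hN : (∑ ρ, ∑ m ∈ Finset.Icc (degZ β ρ + 1) 0, (-1 + if m = 0 then (1 : ℤ) else 0)) -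
      ∑ ρ, ∑ _m ∈ Finset.Icc 1 (degZ β ρ), (-1 : ℤ) =
      ∑ ρ, degZ β ρ + ∑ ρ, if degZ β ρ < 0 then (1 : ℤ) else 0 := by
    rw [← Finset.sum_sub_distrib, ← Finset.sum_add_distrib]
    exact Finset.sum_congr rfl (fun ρ _ => gkz_count _)
  obtain ⟨U, hU, hA⟩ := hA
  obtain ⟨p, -, hB⟩ := hB
  obtain ⟨V, hV⟩ := ((IsUnit.mem_submonoid_iff U).mp hU).exists_right_inv
  have key := hΦ
  rw [hA, hB] at key
  generalize (∑ ρ, ∑ m ∈ Finset.Icc (degZ β ρ + 1) 0, (-1 + if m = 0 then (1 : ℤ) else 0)) = b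
    at *
  generalize (∑ ρ, ∑ _m ∈ Finset.Icc 1 (degZ β ρ), (-1 : ℤ)) = a at *
  have hΦ' : Φ = HahnSeries.single (b - a) (1 : H) * HahnSeries.ofPowerSeries ℤ H (V * p) := by
    have h1 : HahnSeries.single (-a) (1 : H) * HahnSeries.single a (1 : H) = 1 := by
      simp [HahnSeries.single_mul_single]
    have h2 : HahnSeries.single (b - a) (1 : H) =
        HahnSeries.single b (1 : H) * HahnSeries.single (-a) (1 : H) := by
      simp [HahnSeries.single_mul_single, sub_eq_add_neg]
    have h3 : HahnSeries.ofPowerSeries ℤ H U * HahnSeries.ofPowerSeries ℤ H V = 1 := by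
      rw [← map_mul, hV, map_one]
    rw [h2, map_mul]
    linear_combination (HahnSeries.single (-a) (1 : H) * HahnSeries.ofPowerSeries ℤ H V) * key -
      Φ * HahnSeries.ofPowerSeries ℤ H U * HahnSeries.ofPowerSeries ℤ H V * h1 - Φ * h3
  have hcnt : ∀ ρ ∈ Finset.univ, 0 ≤ (if degZ β ρ < 0 then (1 : ℤ) else 0) := by
    intro ρ _; split_ifs <;> simp
  have hc := Finset.sum_nonneg hcnt
  refine ⟨fun j hj => ?_, fun hne => ?_, fun h0 => ?_⟩
  · rw [hΦ']; exact gkz_coeff _ _ _ (by omega)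
  · rw [hΦ']
    apply gkz_coeff
    by_contra hle
    apply hne
    apply hnondeg
    have hc0 := (Finset.sum_eq_zero_iff_of_nonneg hcnt).mp (by omega)
    have hd : ∀ ρ ∈ Finset.univ, 0 ≤ degZ β ρ := by
      intro ρ hρ
      have := hc0 ρ hρ
      by_contra hlt
      rw [if_pos (by omega)] at this
      omega
    have := (Finset.sum_eq_zero_iff_of_nonneg hd).mp (by omega)
    exact fun ρ => this ρ (Finset.mem_univ ρ)
  · subst h0
    have : Φ = 1 := by simpa using hΦ
    rw [this]; simp
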